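/- Let 𝔑₁, 𝔑₂ be properly infinite von Neumann algebras on a Hilbert space H with 𝔑₁ ⊆ 𝔑₂′ and X₁X₂ ≠ 0 for all nonzero X₁ ∈ 𝔑₁, X₂ ∈ 𝔑₂ (Schlieder property). Then for every unit vector Ψ ∈ H and every ε > 0 there exists a unit vector Ψ′ with ‖Ψ - Ψ′‖ < ε such that the vector state of 𝔑₁ ∨ 𝔑₂ induced by Ψ′ is an EPR state for incommensurable pairs, i.e., there are projections E₁, F₁ ∈ 𝔑₁, E₂, F₂ ∈ 𝔑₂ with ω((E₁-E₂)²) = ω((F₁-F₂)²) = 0, ω(|[E₁,F₁]|²) ≠ 0, ω(|[E₂,F₂]|²) ≠ 0, where ω(X) = ⟨Ψ′, XΨ′⟩. -/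

import Mathlib

/-- A partial isometry `v` with initial projection `p` and final projection `q` orthogonal to `p`;
equivalently, a system of `2 × 2` matrix units. -/
structure IsOrthogonalShift {A : Type*} [NonUnitalRing A] [StarRing A] (p q v : A) : Prop where
  isStarProjection_left : IsStarProjection p
  isStarProjection_right : IsStarProjection q
  star_mul : star v * v = p
  mul_star : v * star v = q
  left_mul_right : p * q = 0

theorem mul_eq_self_of_star_mul_self_eq {A : Type*} [NonUnitalNormedRing A] [StarRing A]
    [CStarRing A] {p v : A} (hp : IsStarProjection p) (h : star v * v = p) : v * p = v := by
  have hpp : p * p = p := hp.isIdempotentElem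
  have hps : star p = p := hp.isSelfAdjoint
  have h0 : star (v * p - v) * (v * p - v) = 0 := by
    have e : star (v * p - v) * (v * p - v)
        = p * (star v * v) * p - p * (star v * v) - (star v * v) * p + star v * v := by
      rw [star_sub, star_mul, hps]
      noncomm_ring
    rw [e, h]
    simp [hpp]
  exact sub_eq_zero.mp ((CStarRing.star_mul_self_eq_zero_iff _).mp h0)

namespace IsOrthogonalShift

theorem right_mul_left {A : Type*} [NonUnitalRing A] [StarRing A] {p q v : A}
    (h : IsOrthogonalShift p q v) : q * p = 0 := by
  simpa [h.isStarProjection_left.isSelfAdjoint.star_eq,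
    h.isStarProjection_right.isSelfAdjoint.star_eq] using congrArg star h.left_mul_right

section CStarRing

variable {A : Type*} [NonUnitalNormedRing A] [StarRing A] [CStarRing A] {p q v : A}

theorem mul_left (h : IsOrthogonalShift p q v) : v * p = v :=
  mul_eq_self_of_star_mul_self_eq h.isStarProjection_left h.star_mul

theorem star_mul_right (h : IsOrthogonalShift p q v) : star v * q = star v :=
  mul_eq_self_of_star_mul_self_eq h.isStarProjection_right (by rw [star_star, h.mul_star])

theorem right_mul (h : IsOrthogonalShift p q v) : q * v = v := by
  simpa [h.isStarProjection_right.isSelfAdjoint.star_eq] using congrArg star h.star_mul_right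

theorem left_mul_star (h : IsOrthogonalShift p q v) : p * star v = star v := by
  simpa [h.isStarProjection_left.isSelfAdjoint.star_eq] using congrArg star h.mul_left

theorem left_mul (h : IsOrthogonalShift p q v) : p * v = 0 := by
  rw [← h.right_mul, ← mul_assoc, h.left_mul_right, zero_mul]

theorem mul_right (h : IsOrthogonalShift p q v) : v * q = 0 := by
  rw [← h.mul_left, mul_assoc, h.left_mul_right, mul_zero]

theorem right_mul_star (h : IsOrthogonalShift p q v) : q * star v = 0 := by
  rw [← h.left_mul_star, ← mul_assoc, h.right_mul_left, zero_mul]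

theorem star_mul_left (h : IsOrthogonalShift p q v) : star v * p = 0 := by
  rw [← h.star_mul_right, mul_assoc, h.right_mul_left, mul_zero]

theorem mul_self (h : IsOrthogonalShift p q v) : v * v = 0 := by
  nth_rw 1 [← h.mul_left]
  rw [mul_assoc, h.left_mul, mul_zero]

theorem star_mul_star (h : IsOrthogonalShift p q v) : star v * star v = 0 := by
  simpa using congrArg star h.mul_self

end CStarRing

end IsOrthogonalShift

/-- The projection onto the diagonal of the two ranges identified by an orthogonal shift, i.e.
half of the sum of all four matrix units. -/
noncomputable def diagonalProjection {A : Type*} [Ring A] [StarRing A] [Algebra ℂ A]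
    (p q v : A) : A :=
  (1 / 2 : ℂ) • (p + q + v + star v)

namespace IsOrthogonalShift

theorem isSelfAdjoint_diagonalProjection {A : Type*} [Ring A] [StarRing A]
    [Algebra ℂ A] [StarModule ℂ A] {p q v : A} (h : IsOrthogonalShift p q v) :
    IsSelfAdjoint (diagonalProjection p q v) := by
  rw [IsSelfAdjoint, diagonalProjection]
  simp only [star_smul, star_add, star_star, h.isStarProjection_left.isSelfAdjoint.star_eq,
    h.isStarProjection_right.isSelfAdjoint.star_eq]
  congr 1
  · simp
  · abel

section CStarAlgebra

variable {A : Type*} [NormedRing A] [StarRing A] [CStarRing A] [Algebra ℂ A] {p q v : A}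

theorem isIdempotentElem_diagonalProjection (h : IsOrthogonalShift p q v) :
    IsIdempotentElem (diagonalProjection p q v) := by
  have hp := h.isStarProjection_left.isIdempotentElem.eq
  have hq := h.isStarProjection_right.isIdempotentElem.eq
  have e : (p + q + v + star v) * (p + q + v + star v) = (2 : ℂ) • (p + q + v + star v) := by
    simp only [mul_add, add_mul, hp, hq, h.star_mul, h.mul_star, h.left_mul_right,
      h.right_mul_left, h.mul_left, h.star_mul_right, h.right_mul, h.left_mul_star, h.left_mul,
      h.mul_right, h.right_mul_star, h.star_mul_left, h.mul_self, h.star_mul_star, two_smul]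
    abel
  rw [IsIdempotentElem, diagonalProjection, smul_mul_smul_comm, e, smul_smul]
  norm_num

theorem commutator_diagonalProjection (h : IsOrthogonalShift p q v) :
    p * diagonalProjection p q v - diagonalProjection p q v * p
      = (1 / 2 : ℂ) • (star v - v) := by
  rw [diagonalProjection, mul_smul_comm, smul_mul_assoc, ← smul_sub]
  simp [mul_add, add_mul, h.left_mul_right,
      h.right_mul_left, h.mul_left, h.left_mul_star, h.left_mul, h.star_mul_left]

end CStarAlgebra

section Hilbert

variable {H : Type*} [NormedAddCommGroup H] [InnerProductSpace ℂ H] [CompleteSpace H]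
  {p q v p' q' v' : H →L[ℂ] H} {ξ Φ : H}

theorem apply_eq_zero (h : IsOrthogonalShift p q v) (hΦ : (p + q) Φ = 0) :
    p Φ = 0 ∧ q Φ = 0 ∧ v Φ = 0 ∧ star v Φ = 0 := by
  have hp : p Φ = 0 := by
    simpa [← mul_apply_eq_comp, h.isStarProjection_left.isIdempotentElem.eq,
      h.left_mul_right] using congrArg p hΦ
  have hq : q Φ = 0 := by simpa [hp] using hΦ
  refine ⟨hp, hq, ?_, ?_⟩
  · rw [← h.mul_left, mul_apply_eq_comp, hp, map_zero]
  · rw [← h.star_mul_right, mul_apply_eq_comp, hq, map_zero]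

/-- The action of the matrix units on the sum of an orthogonal vector and a maximally entangled
one. -/
theorem apply_add_entangled (h : IsOrthogonalShift p q v) (hpv : Commute p v') (hξ : p ξ = ξ) (hΦ : (p + q) Φ = 0) (c : ℂ) :
    p (Φ + c • (ξ + v (v' ξ))) = c • ξ ∧ q (Φ + c • (ξ + v (v' ξ))) = c • v (v' ξ) ∧
      v (Φ + c • (ξ + v (v' ξ))) = c • v ξ ∧ star v (Φ + c • (ξ + v (v' ξ))) = c • v' ξ := by
  obtain ⟨h1, h2, h3, h4⟩ := h.apply_eq_zero hΦ
  have mul_app (a b : H →L[ℂ] H) (x : H) : a (b x) = (a * b) x := rfl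
  have hqξ : q ξ = 0 := by rw [← hξ, mul_app, h.right_mul_left]; rfl
  have hsξ : star v ξ = 0 := by rw [← hξ, mul_app, h.star_mul_left]; rfl
  have e1 : p (v (v' ξ)) = 0 := by rw [mul_app p, h.left_mul]; rfl
  have e2 : q (v (v' ξ)) = v (v' ξ) := by rw [mul_app q, h.right_mul]
  have e3 : v (v (v' ξ)) = 0 := by rw [mul_app v v, h.mul_self]; rfl
  have e4 : star v (v (v' ξ)) = v' ξ := by
    rw [mul_app (star v), h.star_mul, mul_app, hpv.eq, ← mul_app, hξ]
  refine ⟨?_, ?_, ?_, ?_⟩ <;> simp only [map_add, map_smul, h1, h2, h3, h4, hξ, hqξ, hsξ, e1, e2,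
    e3, e4, zero_add, add_zero]

theorem apply_ne_apply (h : IsOrthogonalShift p q v) (hv : Commute (star v) v') (hξ : p ξ = ξ)
    (hξ0 : ξ ≠ 0) : v ξ ≠ v' ξ := by
  intro e
  have mul_app (a b : H →L[ℂ] H) (x : H) : a (b x) = (a * b) x := rfl
  have hsξ : star v ξ = 0 := by rw [← hξ, mul_app, h.star_mul_left]; rfl
  apply hξ0
  calc ξ = star v (v ξ) := by rw [mul_app, h.star_mul, hξ]
    _ = v' (star v ξ) := by rw [e, mul_app, hv.eq]; rfl
    _ = 0 := by rw [hsξ, map_zero]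

end Hilbert

end IsOrthogonalShift

section Normalization

variable {H : Type*} [NormedAddCommGroup H] [NormedSpace ℂ H]

theorem norm_sub_normalize_le {Ψ Φ : H} (hΨ : ‖Ψ‖ = 1) :
    ‖Ψ - ((‖Φ‖⁻¹ : ℝ) : ℂ) • Φ‖ ≤ 2 * ‖Ψ - Φ‖ := by
  by_cases hΦ : Φ = 0
  · simp [hΦ, hΨ]
  have hn : ‖Φ‖ ≠ 0 := norm_ne_zero_iff.mpr hΦ
  have h1 : ‖Φ - ((‖Φ‖⁻¹ : ℝ) : ℂ) • Φ‖ = |‖Φ‖ - 1| := by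
    have : Φ - ((‖Φ‖⁻¹ : ℝ) : ℂ) • Φ = ((1 - ‖Φ‖⁻¹ : ℝ) : ℂ) • Φ := by
      push_cast; rw [sub_smul, one_smul]
    rw [this, norm_smul, Complex.norm_real, Real.norm_eq_abs, ← abs_norm Φ, ← abs_mul, abs_norm]
    congr 1
    field_simp
  have h2 : |‖Φ‖ - 1| ≤ ‖Ψ - Φ‖ := by
    rw [← hΨ, norm_sub_rev]; exact abs_norm_sub_norm_le _ _
  have h3 := norm_sub_le_norm_sub_add_norm_sub Ψ Φ (((‖Φ‖⁻¹ : ℝ) : ℂ) • Φ)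
  linarith

end Normalization

section Hilbert

variable {H : Type*} [NormedAddCommGroup H] [InnerProductSpace ℂ H] [CompleteSpace H]

theorem IsStarProjection.norm_apply_le {p : H →L[ℂ] H} (hp : IsStarProjection p) (x : H) :
    ‖p x‖ ≤ ‖x‖ :=
  (p.le_of_opNorm_le hp.norm_le x).trans_eq (one_mul _)

theorem ne_zero_of_hasSum_of_shift [Nontrivial H] {E V : ℕ → H →L[ℂ] H}
    (hsum : ∀ ξ : H, HasSum (fun i => (E i) ξ) ξ)
    (hV : ∀ i, star (V i) * V i = E i ∧ V i * star (V i) = E (i + 1)) (n : ℕ) : E n ≠ 0 := by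
  have step (i : ℕ) : E i = 0 ↔ E (i + 1) = 0 := by
    rw [← (hV i).1, ← (hV i).2, CStarRing.star_mul_self_eq_zero_iff,
      CStarRing.mul_star_self_eq_zero_iff]
  have all (i : ℕ) : E i = 0 ↔ E 0 = 0 := by
    induction i with
    | zero => rfl
    | succ k ih => rw [← step, ih]
  intro hn
  obtain ⟨x, hx⟩ := exists_ne (0 : H)
  refine hx ((hsum x).unique ?_)
  simp [fun i => (all i).2 ((all n).1 hn), hasSum_zero]

/-- Compressing away the tails of two sequences of projections converges strongly
to the identity. -/
theorem tendsto_compress {E E' : ℕ → H →L[ℂ] H} (hE : ∀ i, IsStarProjection (E i))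
    {Ψ : H} (hΨ : Summable fun i => E i Ψ) (hΨ' : Summable fun i => E' i Ψ) :
    Filter.Tendsto (fun n => (1 - (E n + E (n + 1))) ((1 - (E' n + E' (n + 1))) Ψ))
      Filter.atTop (nhds Ψ) := by
  have t := hΨ.tendsto_atTop_zero
  have t' := hΨ'.tendsto_atTop_zero
  have s := t.add ((Filter.tendsto_add_atTop_iff_nat 1).2 t)
  have s' := t'.add ((Filter.tendsto_add_atTop_iff_nat 1).2 t')
  rw [add_zero] at s s'
  have r : Filter.Tendsto (fun n => (E n + E (n + 1)) (E' n Ψ + E' (n + 1) Ψ))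
      Filter.atTop (nhds 0) := by
    refine squeeze_zero_norm (a := fun n => 2 * ‖E' n Ψ + E' (n + 1) Ψ‖) (fun n => ?_)
      (by simpa using s'.norm.const_mul 2)
    set x := E' n Ψ + E' (n + 1) Ψ
    have h1 := (hE n).norm_apply_le x
    have h2 := (hE (n + 1)).norm_apply_le x
    have h3 := norm_add_le (E n x) (E (n + 1) x)
    rw [add_apply]
    linarith
  have f := ((tendsto_const_nhds (x := Ψ)).sub s').sub (s.sub r)
  simp only [sub_zero] at f
  refine f.congr fun n => ?_
  simp only [sub_apply, add_apply,
    one_apply_eq_self, map_sub, map_add]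
  abel

theorem inner_star_mul_self_apply_ne_zero {X : H →L[ℂ] H} {x : H} (hx : X x ≠ 0) :
    inner ℂ x ((star X * X) x) ≠ 0 := by
  rw [mul_apply_eq_comp, ContinuousLinearMap.star_eq_adjoint,
    ContinuousLinearMap.adjoint_inner_right]
  exact inner_self_ne_zero.mpr hx

end Hilbert

theorem inner_mul_self_apply_eq_zero {H : Type*} [NormedAddCommGroup H]
    [InnerProductSpace ℂ H] {X : H →L[ℂ] H} {x : H} (hx : X x = 0) :
    inner ℂ x ((X * X) x) = 0 := by
  simp [hx]

theorem VonNeumannAlgebra.diagonalProjection_mem {H : Type*} [NormedAddCommGroup H]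
    [InnerProductSpace ℂ H] [CompleteSpace H] (N : VonNeumannAlgebra H) {p q v : H →L[ℂ] H}
    (hp : p ∈ N) (hq : q ∈ N) (hv : v ∈ N) : diagonalProjection p q v ∈ N :=
  N.toStarSubalgebra.smul_mem
    (add_mem (S := VonNeumannAlgebra H) (add_mem (add_mem hp hq) hv) (star_mem hv)) _

/-- Theorem 3 of the paper: For properly infinite von Neumann algebras
`N₁ ⊆ N₂'` with the Schlieder property, the vector states that are EPR states for
incommensurable pairs are norm dense among unit vectors. -/
theorem stmt_16 {H : Type*} [NormedAddCommGroup H] [InnerProductSpace ℂ H] [CompleteSpace H]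
    (N₁ N₂ : VonNeumannAlgebra H)
    (hNcomm : ∀ x ∈ N₁, ∀ y ∈ N₂, x * y = y * x)
    -- proper infiniteness of N₁ : a countable family of mutually orthogonal projections
    -- summing to 1, with shift partial isometries
    (hPI₁ : ∃ (E : ℕ → H →L[ℂ] H) (V : ℕ → H →L[ℂ] H),
      (∀ i, E i ∈ N₁) ∧ (∀ i, V i ∈ N₁) ∧
      (∀ i, IsIdempotentElem (E i) ∧ IsSelfAdjoint (E i)) ∧
      (∀ i j, i ≠ j → E i * E j = 0) ∧
      (∀ ξ : H, HasSum (fun i => (E i) ξ) ξ) ∧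
      (∀ i, star (V i) * V i = E i ∧ V i * star (V i) = E (i + 1)))
    (hPI₂ : ∃ (E : ℕ → H →L[ℂ] H) (V : ℕ → H →L[ℂ] H),
      (∀ i, E i ∈ N₂) ∧ (∀ i, V i ∈ N₂) ∧
      (∀ i, IsIdempotentElem (E i) ∧ IsSelfAdjoint (E i)) ∧
      (∀ i j, i ≠ j → E i * E j = 0) ∧
      (∀ ξ : H, HasSum (fun i => (E i) ξ) ξ) ∧
      (∀ i, star (V i) * V i = E i ∧ V i * star (V i) = E (i + 1)))
    -- Schlieder property
    (hSch : ∀ X₁ ∈ N₁, ∀ X₂ ∈ N₂, X₁ ≠ 0 → X₂ ≠ 0 → X₁ * X₂ ≠ 0) :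
    ∀ (Ψ : H), ‖Ψ‖ = 1 → ∀ ε : ℝ, 0 < ε →
      ∃ Ψ' : H, ‖Ψ'‖ = 1 ∧ ‖Ψ - Ψ'‖ < ε ∧
        ∃ E₁ ∈ N₁, ∃ F₁ ∈ N₁, ∃ E₂ ∈ N₂, ∃ F₂ ∈ N₂,
          (IsIdempotentElem E₁ ∧ IsSelfAdjoint E₁) ∧
          (IsIdempotentElem F₁ ∧ IsSelfAdjoint F₁) ∧
          (IsIdempotentElem E₂ ∧ IsSelfAdjoint E₂) ∧
          (IsIdempotentElem F₂ ∧ IsSelfAdjoint F₂) ∧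
          inner (𝕜 := ℂ) Ψ' (((E₁ - E₂) * (E₁ - E₂)) Ψ') = 0 ∧
          inner (𝕜 := ℂ) Ψ' (((F₁ - F₂) * (F₁ - F₂)) Ψ') = 0 ∧
          inner (𝕜 := ℂ) Ψ' ((star (E₁ * F₁ - F₁ * E₁) * (E₁ * F₁ - F₁ * E₁)) Ψ') ≠ 0 ∧
          inner (𝕜 := ℂ) Ψ' ((star (E₂ * F₂ - F₂ * E₂) * (E₂ * F₂ - F₂ * E₂)) Ψ') ≠ 0 := by
  obtain ⟨E, V, hE, hV, hEp, hEo, hEs, hEV⟩ := hPI₁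
  obtain ⟨E', V', hE', hV', hEp', hEo', hEs', hEV'⟩ := hPI₂
  intro Ψ hΨ ε hε
  have : Nontrivial H := ⟨⟨Ψ, 0, fun h => by simp [h] at hΨ⟩⟩
  have hproj (i : ℕ) : IsStarProjection (E i) := ⟨(hEp i).1, (hEp i).2⟩
  have hproj' (i : ℕ) : IsStarProjection (E' i) := ⟨(hEp' i).1, (hEp' i).2⟩
  have hlim := tendsto_compress hproj (hEs Ψ).summable (hEs' Ψ).summable
  obtain ⟨n, hn⟩ := ((Metric.tendsto_nhds.mp hlim) (min (ε / 2) 1 / 2) (by positivity)).exists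
  have h : IsOrthogonalShift (E n) (E (n + 1)) (V n) :=
    ⟨hproj n, hproj (n + 1), (hEV n).1, (hEV n).2, hEo _ _ (by simp)⟩
  have h' : IsOrthogonalShift (E' n) (E' (n + 1)) (V' n) :=
    ⟨hproj' n, hproj' (n + 1), (hEV' n).1, (hEV' n).2, hEo' _ _ (by simp)⟩
  obtain ⟨ξ, hξ0, hξ, hξ'⟩ : ∃ ξ : H, ξ ≠ 0 ∧ E n ξ = ξ ∧ E' n ξ = ξ := by
    obtain ⟨u, hu⟩ := DFunLike.ne_iff.mp (hSch _ (hE n) _ (hE' n)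
      (ne_zero_of_hasSum_of_shift hEs hEV n) (ne_zero_of_hasSum_of_shift hEs' hEV' n))
    refine ⟨(E n * E' n) u, hu, ?_, ?_⟩
    · rw [← mul_apply_eq_comp, ← mul_assoc, (hproj n).isIdempotentElem.eq]
    · rw [hNcomm _ (hE n) _ (hE' n), ← mul_apply_eq_comp, ← mul_assoc,
        (hproj' n).isIdempotentElem.eq]
  set Φ := (1 - (E n + E (n + 1))) ((1 - (E' n + E' (n + 1))) Ψ) with hΦdef
  have hkill {p q v : H →L[ℂ] H} (hs : IsOrthogonalShift p q v) (x : H) :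
      (p + q) ((1 - (p + q)) x) = 0 := by
    rw [← mul_apply_eq_comp]
    have : (p + q) * (1 - (p + q)) = 0 := by
      simp [mul_sub, mul_add, add_mul, hs.left_mul_right, hs.right_mul_left,
        hs.isStarProjection_left.isIdempotentElem.eq, hs.isStarProjection_right.isIdempotentElem.eq]
    rw [this]; rfl
  have hΦ : (E n + E (n + 1)) Φ = 0 := hkill h _
  have hΦ' : (E' n + E' (n + 1)) Φ = 0 := by
    have hc : (1 - (E n + E (n + 1))) * (1 - (E' n + E' (n + 1)))
        = (1 - (E' n + E' (n + 1))) * (1 - (E n + E (n + 1))) :=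
      hNcomm _ (sub_mem (one_mem _) (add_mem (hE n) (hE (n + 1)))) _
        (sub_mem (one_mem _) (add_mem (hE' n) (hE' (n + 1))))
    rw [hΦdef, ← mul_apply_eq_comp (1 - (E n + E (n + 1))), hc]
    exact hkill h' _
  set χ := ξ + V n (V' n ξ) with hχ
  have hχ' : χ = ξ + V' n (V n ξ) := by
    rw [hχ, ← mul_apply_eq_comp, hNcomm _ (hV n) _ (hV' n)]; rfl
  obtain ⟨δ, hδ, hδχ⟩ : ∃ δ : ℝ, 0 < δ ∧ ‖χ‖ * δ < min (ε / 2) 1 / 2 :=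
    exists_pos_mul_lt (by positivity) _
  set Ω := Φ + (δ : ℂ) • χ with hΩ
  have hδ0 : (δ : ℂ) ≠ 0 := by exact_mod_cast hδ.ne'
  have hclose : ‖Ψ - Ω‖ < min (ε / 2) 1 := by
    have h1 : ‖Ψ - Φ‖ < min (ε / 2) 1 / 2 := by rwa [← dist_eq_norm, dist_comm]
    have h2 : ‖(δ : ℂ) • χ‖ = ‖χ‖ * δ := by
      rw [norm_smul, Complex.norm_real, Real.norm_of_nonneg hδ.le, mul_comm]
    have h3 := norm_sub_le (Ψ - Φ) ((δ : ℂ) • χ)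
    rw [hΩ, ← sub_sub]
    linarith
  have hΩ0 : Ω ≠ 0 := by
    intro h0
    rw [h0, sub_zero, hΨ] at hclose
    exact absurd (hclose.trans_le (min_le_right _ _)) (lt_irrefl _)
  have hnΩ : ‖Ω‖ ≠ 0 := norm_ne_zero_iff.mpr hΩ0
  obtain ⟨a1, a2, a3, a4⟩ := h.apply_add_entangled (v' := V' n)
    (hNcomm _ (hE n) _ (hV' n)) hξ hΦ δ
  obtain ⟨b1, b2, b3, b4⟩ := h'.apply_add_entangled (v' := V n)
    (hNcomm _ (hV n) _ (hE' n)).symm hξ' hΦ' δ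
  rw [← hχ, ← hΩ] at a1 a2 a3 a4
  rw [← hχ', ← hΩ] at b1 b2 b3 b4
  have hne : V n ξ ≠ V' n ξ := h.apply_ne_apply (hNcomm _ (star_mem (hV n)) _ (hV' n)) hξ hξ0
  have hc0 : ((‖Ω‖⁻¹ : ℝ) : ℂ) ≠ 0 := by exact_mod_cast inv_ne_zero hnΩ
  refine ⟨((‖Ω‖⁻¹ : ℝ) : ℂ) • Ω, ?_, ?_, E n, hE n,
    diagonalProjection (E n) (E (n + 1)) (V n),
    N₁.diagonalProjection_mem (hE n) (hE (n + 1)) (hV n), E' n, hE' n,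
    diagonalProjection (E' n) (E' (n + 1)) (V' n),
    N₂.diagonalProjection_mem (hE' n) (hE' (n + 1)) (hV' n), hEp n,
    ⟨h.isIdempotentElem_diagonalProjection, h.isSelfAdjoint_diagonalProjection⟩, hEp' n,
    ⟨h'.isIdempotentElem_diagonalProjection, h'.isSelfAdjoint_diagonalProjection⟩,
    inner_mul_self_apply_eq_zero ?_, inner_mul_self_apply_eq_zero ?_,
    inner_star_mul_self_apply_ne_zero ?_, inner_star_mul_self_apply_ne_zero ?_⟩
  · rw [norm_smul, Complex.norm_real, norm_inv, norm_norm, inv_mul_cancel₀ hnΩ]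
  · have := norm_sub_normalize_le (Φ := Ω) hΨ
    have := hclose.trans_le (min_le_left _ _)
    linarith
  · rw [map_smul, sub_apply, a1, b1, sub_self, smul_zero]
  · have hswap : V n (V' n ξ) = V' n (V n ξ) := add_left_cancel (hχ.symm.trans hχ')
    simp only [map_smul, sub_apply, diagonalProjection,
      smul_apply, add_apply, a1, a2, a3, a4, b1, b2, b3,
      b4, hswap]
    module
  · rw [h.commutator_diagonalProjection, map_smul, smul_apply,
      sub_apply, a3, a4, ← smul_sub]
    exact smul_ne_zero hc0 (smul_ne_zero (by norm_num)
      (smul_ne_zero hδ0 (sub_ne_zero.mpr hne.symm)))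
  · rw [h'.commutator_diagonalProjection, map_smul, smul_apply,
      sub_apply, b3, b4, ← smul_sub]
    exact smul_ne_zero hc0 (smul_ne_zero (by norm_num)
      (smul_ne_zero hδ0 (sub_ne_zero.mpr hne)))
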